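/- arXiv:quant-ph/0502138 — 2 statements merged into one kernel-verified Lean document; each statement's English description precedes it below -/
import Mathlib

section
/- For every a with 0 ≤ a ≤ n, every b with 1 ≤ b ≤ n, and every function f : {0,…,n} → {1,…,n}, one has ⟨v_{a,b} ⊗ conj(v_{a,b}), ψ_f⟩ ≠ 0 if and only if f(a) = b; in fact this inner product equals (1/√n) if f(a) = b and equals 0 otherwise. -/
open scoped ComplexInnerProductSpace ComplexConjugate BigOperators

/-- The tensor product `x ⊗ conj x'` of a vector with the componentwise conjugate of
another vector, viewed as a vector of `ℂ^n ⊗ ℂ^n ≅ ℂ^{n²}`. -/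
noncomputable def tensConj {n : ℕ} (x x' : EuclideanSpace ℂ (Fin n)) :
    EuclideanSpace ℂ (Fin n × Fin n) :=
  WithLp.toLp 2 fun p => x p.1 * conj (x' p.2)
/-- The state `φ = (1/√n) Σ_b v_b ⊗ conj v_b` built from a basis `v`. -/
noncomputable def meState {n : ℕ} (v : Fin n → EuclideanSpace ℂ (Fin n)) :
    EuclideanSpace ℂ (Fin n × Fin n) :=
  ((Real.sqrt n : ℂ))⁻¹ • ∑ b : Fin n, tensConj (v b) (v b)

/-- The state `ψ_f = -φ + γ_f` where `φ = (1/√n) Σ_b v_{0,b} ⊗ conj v_{0,b}` and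
`γ_f = (1/√n) Σ_a v_{a,f(a)} ⊗ conj v_{a,f(a)}`. -/
noncomputable def psiState {n : ℕ} (v : Fin (n + 1) → Fin n → EuclideanSpace ℂ (Fin n))
    (f : Fin (n + 1) → Fin n) : EuclideanSpace ℂ (Fin n × Fin n) :=
  -meState (v 0) +
    ((Real.sqrt n : ℂ))⁻¹ • ∑ a : Fin (n + 1), tensConj (v a (f a)) (v a (f a))

/-!
Since `⟨x ⊗ conj x, y ⊗ conj y⟩ = |⟨x, y⟩|²`, Parseval's identity gives
`⟨x ⊗ conj x, φ⟩ = ‖x‖² / √n` for every `x`. For `x = v_{a,b}` this cancels the contribution to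
`⟨x ⊗ conj x, γ_f⟩` of the `n` bases other than `B_a`, each of which contributes `1/n` before the
factor `1/√n`. What remains is the term of `B_a` itself, `|⟨v_{a,b}, v_{a,f(a)}⟩|² / √n`.
-/

section Orthonormal

variable {𝕜 E ι κ : Type*} [RCLike 𝕜] [NormedAddCommGroup E] [InnerProductSpace 𝕜 E]

theorem sum_inner_mul_inner_of_orthonormal_of_card_eq_finrank [Fintype ι]
    [FiniteDimensional 𝕜 E] {v : ι → E} (hv : Orthonormal 𝕜 v)
    (hcard : Fintype.card ι = Module.finrank 𝕜 E) (x y : E) :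
    ∑ i, inner 𝕜 x (v i) * inner 𝕜 (v i) y = inner 𝕜 x y := by
  have hspan := hv.linearIndependent.span_eq_top_of_card_eq_finrank' hcard
  simpa only [OrthonormalBasis.coe_mk] using
    (OrthonormalBasis.mk hv hspan.ge).sum_inner_mul_inner x y

theorem norm_inner_sq_eq_ite_of_orthonormal [DecidableEq κ] {v : κ → E} (hv : Orthonormal 𝕜 v)
    (i j : κ) : ‖inner 𝕜 (v i) (v j)‖ ^ 2 = if i = j then 1 else 0 := by
  rw [orthonormal_iff_ite.mp hv i j]
  split_ifs <;> simp

theorem sum_norm_inner_sq_of_unbiased [Fintype ι] [DecidableEq κ] {v : ι → κ → E} {a : ι} {c : ℝ}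
    {b : κ} (horth : Orthonormal 𝕜 (v a))
    (hunb : ∀ a', a ≠ a' → ∀ b', ‖inner 𝕜 (v a b) (v a' b')‖ ^ 2 = c) (f : ι → κ) :
    ∑ a', ‖inner 𝕜 (v a b) (v a' (f a'))‖ ^ 2 =
      (if b = f a then 1 else 0) + ((Fintype.card ι : ℝ) - 1) * c := by
  classical
  have hother : ∑ a' ∈ {a}ᶜ, ‖inner 𝕜 (v a b) (v a' (f a'))‖ ^ 2 =
      ((Fintype.card ι : ℝ) - 1) * c := by
    rw [Finset.sum_congr rfl fun a' ha' ↦ hunb a' (by simpa [eq_comm] using ha') (f a'),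
      Finset.sum_const, Finset.card_compl, Finset.card_singleton, nsmul_eq_mul,
      Nat.cast_pred (Fintype.card_pos_iff.mpr ⟨a⟩)]
  rw [Fintype.sum_eq_add_sum_compl a, norm_inner_sq_eq_ite_of_orthonormal horth, hother]

end Orthonormal

section TensConj

variable {n : ℕ}

theorem inner_tensConj_tensConj (x x' y y' : EuclideanSpace ℂ (Fin n)) :
    ⟪tensConj x x', tensConj y y'⟫ = ⟪x, y⟫ * ⟪y', x'⟫ := by
  simp only [tensConj, PiLp.inner_apply, RCLike.inner_apply, map_mul, Complex.conj_conj,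
    Finset.sum_mul_sum, Fintype.sum_prod_type]
  refine Finset.sum_congr rfl fun i _ ↦ Finset.sum_congr rfl fun j _ ↦ ?_
  ring

theorem inner_tensConj_self_tensConj_self (x y : EuclideanSpace ℂ (Fin n)) :
    ⟪tensConj x x, tensConj y y⟫ = (‖⟪x, y⟫‖ : ℂ) ^ 2 := by
  rw [inner_tensConj_tensConj, ← inner_conj_symm y x, Complex.mul_conj']

theorem inner_tensConj_meState {v : Fin n → EuclideanSpace ℂ (Fin n)} (hv : Orthonormal ℂ v)
    (x x' : EuclideanSpace ℂ (Fin n)) :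
    ⟪tensConj x x', meState v⟫ = (Real.sqrt n : ℂ)⁻¹ * ⟪x, x'⟫ := by
  simp only [meState, inner_smul_right, inner_sum, inner_tensConj_tensConj]
  rw [sum_inner_mul_inner_of_orthonormal_of_card_eq_finrank hv (by simp)]

theorem inner_tensConj_self_psiState {v : Fin (n + 1) → Fin n → EuclideanSpace ℂ (Fin n)}
    (hv : Orthonormal ℂ (v 0)) (f : Fin (n + 1) → Fin n) (x : EuclideanSpace ℂ (Fin n)) :
    ⟪tensConj x x, psiState v f⟫ =
      (Real.sqrt n : ℂ)⁻¹ * ((∑ a, ‖⟪x, v a (f a)⟫‖ ^ 2 - ‖x‖ ^ 2 : ℝ) : ℂ) := by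
  simp only [psiState, inner_add_right, inner_neg_right, inner_smul_right, inner_sum,
    inner_tensConj_meState hv, inner_tensConj_self_tensConj_self, inner_self_eq_norm_sq_to_K,
    Complex.coe_algebraMap]
  push_cast
  ring

end TensConj

/-- `⟨v_{a,b} ⊗ conj v_{a,b}, ψ_f⟩ ≠ 0` if and only if `f(a) = b`; in fact this
inner product equals `1/√n` when `f(a) = b` and `0` otherwise. -/
theorem inner_tensConj_psiState
    (n : ℕ) (hn : 1 ≤ n)
    (v : Fin (n + 1) → Fin n → EuclideanSpace ℂ (Fin n))
    (horth : ∀ a, Orthonormal ℂ (v a))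
    (hmub : ∀ a a', a ≠ a' → ∀ b b', ‖⟪v a b, v a' b'⟫‖ ^ 2 = 1 / n)
    (a : Fin (n + 1)) (b : Fin n) (f : Fin (n + 1) → Fin n) :
    (⟪tensConj (v a b) (v a b), psiState v f⟫ ≠ 0 ↔ f a = b) ∧
    ⟪tensConj (v a b) (v a b), psiState v f⟫ =
      if f a = b then ((Real.sqrt n : ℂ))⁻¹ else 0 := by
  have hn0 : (n : ℝ) ≠ 0 := by positivity
  have hoverlaps : ∑ a', ‖⟪v a b, v a' (f a')⟫‖ ^ 2 = (if f a = b then 1 else 0) + 1 := by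
    rw [sum_norm_inner_sq_of_unbiased (horth a) (fun a' ha' ↦ hmub a a' ha' b) f]
    simp [hn0, eq_comm]
  have hinner : ⟪tensConj (v a b) (v a b), psiState v f⟫ =
      if f a = b then ((Real.sqrt n : ℂ))⁻¹ else 0 := by
    rw [inner_tensConj_self_psiState (horth 0), hoverlaps, (horth a).norm_eq_one b]
    split_ifs <;> simp
  refine ⟨?_, hinner⟩
  have hsqrt : ((Real.sqrt n : ℂ))⁻¹ ≠ 0 := by simp [hn0]
  rw [hinner, ite_ne_right_iff, and_iff_left hsqrt]
end

section
/- Let B_a = {v_{a,b} : 1 ≤ b ≤ n}, 0 ≤ a ≤ n, be n+1 mutually unbiased orthonormal bases of ℂ^n, and let (X, 𝓑) be an affine plane of order n with parallel classes L_0, …, L_n, where L_a = {ℓ_{a,b} : 1 ≤ b ≤ n}. Then the vectors |ℓ_{a,b}⟩ := v_{a,b} ⊗ conj(v_{a,b}) ∈ ℂ^{n²} form a realization of the affine plane: ⟨ℓ_{a,b}|ℓ_{a,b'}⟩ = δ_{b,b'} for lines in the same parallel class, and ⟨ℓ_{a,b}|ℓ_{a',b'}⟩ = 1/n = n/n² for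 lines from different parallel classes. -/
open scoped ComplexInnerProductSpace ComplexConjugate BigOperators

/-- An affine plane of order `n`, presented through its `n+1` parallel classes
`L 0, …, L n` of lines on the point set `Fin n × Fin n` (an `(n², n²+n, n+1, n, 1)` design). -/
structure IsAffinePlane (n : ℕ) (L : Fin (n + 1) → Finset (Finset (Fin n × Fin n))) :
    Prop where
  card_class : ∀ i, (L i).card = n
  card_line : ∀ i, ∀ ℓ ∈ L i, ℓ.card = n
  parallel_disjoint : ∀ i, ∀ ℓ ∈ L i, ∀ ℓ' ∈ L i, ℓ ≠ ℓ' → ℓ ∩ ℓ' = ∅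
  class_cover : ∀ i, ∀ p : Fin n × Fin n, ∃ ℓ ∈ L i, p ∈ ℓ
  classes_disjoint : ∀ i j, i ≠ j → ∀ ℓ ∈ L i, ℓ ∉ L j
  unique_line : ∀ p q : Fin n × Fin n, p ≠ q →
    ∃! ℓ : Finset (Fin n × Fin n), (∃ i, ℓ ∈ L i) ∧ p ∈ ℓ ∧ q ∈ ℓ


section TensConj

variable {n : ℕ} {ι κ : Type*}

theorem inner_tensConj (x x' y y' : EuclideanSpace ℂ (Fin n)) :
    ⟪tensConj x x', tensConj y y'⟫ = ⟪x, y⟫ * conj ⟪x', y'⟫ := by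
  simp only [tensConj, PiLp.inner_apply, RCLike.inner_apply, map_sum, map_mul,
    Complex.conj_conj, Fintype.sum_prod_type, Finset.sum_mul_sum]
  refine Finset.sum_congr rfl fun i _ => Finset.sum_congr rfl fun j _ => ?_
  ring

theorem inner_tensConj_self (x y : EuclideanSpace ℂ (Fin n)) :
    ⟪tensConj x x, tensConj y y⟫ = ((‖⟪x, y⟫‖ ^ 2 : ℝ) : ℂ) := by
  rw [inner_tensConj, Complex.mul_conj, Complex.normSq_eq_norm_sq]

theorem orthonormal_tensConj {v : ι → EuclideanSpace ℂ (Fin n)}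
    {w : κ → EuclideanSpace ℂ (Fin n)} (hv : Orthonormal ℂ v) (hw : Orthonormal ℂ w) :
    Orthonormal ℂ fun p : ι × κ => tensConj (v p.1) (w p.2) := by
  classical
  rw [orthonormal_iff_ite] at hv hw ⊢
  rintro ⟨i, k⟩ ⟨j, l⟩
  rw [inner_tensConj, hv, hw, apply_ite conj, map_one, map_zero, ite_zero_mul_ite_zero, one_mul]
  simp only [Prod.mk.injEq]

theorem orthonormal_tensConj_self {v : ι → EuclideanSpace ℂ (Fin n)} (hv : Orthonormal ℂ v) :
    Orthonormal ℂ fun i => tensConj (v i) (v i) :=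
  (orthonormal_tensConj hv hv).comp (fun i => (i, i)) fun _ _ h => congrArg Prod.fst h

theorem mub_tensConj_realization_of_affinePlane_general [DecidableEq κ] (hn : 1 ≤ n)
    {v : ι → κ → EuclideanSpace ℂ (Fin n)} (horth : ∀ a, Orthonormal ℂ (v a))
    (hmub : ∀ a a', a ≠ a' → ∀ b b', ‖⟪v a b, v a' b'⟫‖ ^ 2 = 1 / n) :
    (∀ a b b', ⟪tensConj (v a b) (v a b), tensConj (v a b') (v a b')⟫ =
      if b = b' then 1 else 0) ∧
    (∀ a a', a ≠ a' → ∀ b b',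
      ⟪tensConj (v a b) (v a b), tensConj (v a' b') (v a' b')⟫ = 1 / n) ∧
    (1 / n : ℂ) = (n : ℂ) / (n ^ 2 : ℂ) := by
  have hn0 : (n : ℂ) ≠ 0 := Nat.cast_ne_zero.mpr (Nat.one_le_iff_ne_zero.mp hn)
  refine ⟨fun a => orthonormal_iff_ite.mp (orthonormal_tensConj_self (horth a)),
    fun a a' hne b b' => ?_, by field_simp⟩
  rw [inner_tensConj_self, hmub a a' hne b b', Complex.ofReal_div, Complex.ofReal_one,
    Complex.ofReal_natCast]

end TensConj

/-- given `n+1` mutually unbiased orthonormal bases `B_a = {v a b}` of `ℂ^n`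
and an affine plane of order `n` with parallel classes `L a = {line a b : b}`, the vectors
`|line a b⟩ := v_{a,b} ⊗ conj v_{a,b} ∈ ℂ^{n²}` form a realization of the affine plane:
`⟨line a b | line a b'⟩ = δ_{b,b'}` for lines in a common parallel class, and
`⟨line a b | line a' b'⟩ = 1/n = n/n²` for lines from different parallel classes. -/
theorem mub_tensConj_realization_of_affinePlane
    (n : ℕ) (hn : 1 ≤ n)
    (v : Fin (n + 1) → Fin n → EuclideanSpace ℂ (Fin n))
    (horth : ∀ a, Orthonormal ℂ (v a))
    (hmub : ∀ a a', a ≠ a' → ∀ b b', ‖⟪v a b, v a' b'⟫‖ ^ 2 = 1 / n)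
    (L : Fin (n + 1) → Finset (Finset (Fin n × Fin n)))
    (hL : IsAffinePlane n L)
    (line : Fin (n + 1) → Fin n → Finset (Fin n × Fin n))
    (hline : ∀ a b, line a b ∈ L a)
    (hline_inj : ∀ a, Function.Injective (line a)) :
    (∀ a : Fin (n + 1), ∀ b b' : Fin n,
      ⟪tensConj (v a b) (v a b), tensConj (v a b') (v a b')⟫ =
        if b = b' then 1 else 0) ∧
    (∀ a a' : Fin (n + 1), a ≠ a' → ∀ b b' : Fin n,
      ⟪tensConj (v a b) (v a b), tensConj (v a' b') (v a' b')⟫ = 1 / n) ∧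
    (1 / n : ℂ) = (n : ℂ) / (n ^ 2 : ℂ) :=
  mub_tensConj_realization_of_affinePlane_general hn horth hmub
end
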